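/- The closed irreducible subsets of Johnstone's dcpo 𝕊 are exactly 𝕊 itself and the down-closures ↓x of single points x ∈ 𝕊. In particular, since 𝕊 has no largest element, the Scott topology on 𝕊 is not sober. -/

import Mathlib

namespace HoZhao

variable {α : Type*}

/-- A set is Scott-closed if it is a lower set and contains the supremum of each of its
nonempty directed subsets. -/
def ScottClosed [Preorder α] (S : Set α) : Prop :=
  IsLowerSet S ∧ ∀ d : Set α, d ⊆ S → d.Nonempty → DirectedOn (· ≤ ·) d →
    ∀ a : α, IsLUB d a → a ∈ S

/-- A nonempty set is irreducible if whenever it is covered by two Scott-closed sets it is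
contained in one of them. -/
def ScottIrred [Preorder α] (A : Set α) : Prop :=
  A.Nonempty ∧ ∀ B C : Set α, ScottClosed B → ScottClosed C → A ⊆ B ∪ C → A ⊆ B ∨ A ⊆ C

/-- A dcpo: every nonempty directed subset has a supremum. -/
def IsDcpo (α : Type*) [Preorder α] : Prop :=
  ∀ d : Set α, d.Nonempty → DirectedOn (· ≤ ·) d → ∃ a : α, IsLUB d a

/-- The order sobrification: the poset of Scott-closed irreducible subsets, ordered by
inclusion. -/
abbrev OrderSob (α : Type*) [Preorder α] :=
  {A : Set α // ScottClosed A ∧ ScottIrred A}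

/-- The underlying set of Johnstone's dcpo: ℕ × ℕ∞. -/
def JS : Type := ℕ × ℕ∞

/-- Johnstone's order: (m,n) ≤ (m',n') iff (m = m' and n ≤ n'), or
(n' = ∞, n is finite, and n ≤ m'). -/
instance : PartialOrder JS where
  le p q := (p.1 = q.1 ∧ p.2 ≤ q.2) ∨ (q.2 = ⊤ ∧ p.2 ≠ ⊤ ∧ p.2 ≤ (q.1 : ℕ∞))
  le_refl p := Or.inl ⟨rfl, le_rfl⟩
  le_trans p q r hpq hqr := by
    rcases hpq with ⟨h1, h2⟩ | ⟨h1, h2, h3⟩ <;>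
      rcases hqr with ⟨g1, g2⟩ | ⟨g1, g2, g3⟩
    · exact Or.inl ⟨h1.trans g1, h2.trans g2⟩
    · refine Or.inr ⟨g1, ?_, h2.trans g3⟩
      intro h
      rw [h] at h2
      exact g2 (top_le_iff.mp h2)
    · rw [h1] at g2
      refine Or.inr ⟨top_le_iff.mp g2, h2, ?_⟩
      rw [← g1]
      exact h3
    · exact absurd h1 g2
  le_antisymm p q hpq hqp := by
    rcases hpq with ⟨h1, h2⟩ | ⟨h1, h2, h3⟩ <;>
      rcases hqp with ⟨g1, g2⟩ | ⟨g1, g2, g3⟩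
    · exact Prod.ext h1 (le_antisymm h2 g2)
    · rw [g1] at h2
      exact absurd (top_le_iff.mp h2) g2
    · rw [h1] at g2
      exact absurd (top_le_iff.mp g2) h2
    · exact absurd g1 h2

/-!
Each `m : ℕ` contributes a column `(m, 0) < (m, 1) < ⋯` with supremum `(m, ∞)`, and a directed set
either has a greatest element or is cofinal in a column; so a lower set is Scott-closed as soon as
it contains `(m, ∞)` whenever it contains the rest of column `m`. Since `(m, ∞)` lies above every
`(j, k)` with `k ≤ m`, a closed set with infinitely many points `(m, ∞)` is everything. Two closed
sets covering `𝕊` share out these points, hence one of them is `𝕊`, and `𝕊` is irreducible.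

Let `A` be closed and proper. By Zorn's lemma every point of `A` lies below a maximal one, so for
any maximal `x` the set `A` is covered by `↓x` and the down-closure `C` of its other maximal points.
The set `C` is closed: if it contains all `(j, k)` with `k` finite, then `(j, ∞) ∈ A`, and as only
finitely many `(m, ∞)` lie in `A`, a maximal point above `(j, k)` for large `k` must be `(j, ∞)`.
Since `x ∉ C`, irreducibility of `A` forces `A = ↓x`.
-/

theorem scottClosed_univ [Preorder α] : ScottClosed (Set.univ : Set α) :=
  ⟨isLowerSet_univ, fun _ _ _ _ _ _ => Set.mem_univ _⟩

theorem scottClosed_Iic [Preorder α] (x : α) : ScottClosed (Set.Iic x) :=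
  ⟨isLowerSet_Iic x, fun _ hd _ _ _ ha => ha.2 hd⟩

theorem scottIrred_Iic [Preorder α] (x : α) : ScottIrred (Set.Iic x) :=
  ⟨Set.nonempty_Iic, fun _ _ hB hC h =>
    (h Set.self_mem_Iic).imp (hB.1.Iic_subset ·) (hC.1.Iic_subset ·)⟩

theorem ScottClosed.exists_le_maximal [Preorder α] (hα : IsDcpo α) {A : Set α}
    (hA : ScottClosed A) {y : α} (hy : y ∈ A) : ∃ x, y ≤ x ∧ Maximal (· ∈ A) x := by
  refine zorn_le_nonempty₀ A (fun c hcA hc z hz => ?_) y hy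
  obtain ⟨a, ha⟩ := hα c ⟨z, hz⟩ hc.directedOn
  exact ⟨a, hA.2 c hcA ⟨z, hz⟩ hc.directedOn a ha, ha.1⟩

theorem ScottIrred.eq_Iic_of_maximal [PartialOrder α] (hα : IsDcpo α) {A : Set α}
    (hI : ScottIrred A) (hA : ScottClosed A) {x : α} (hx : Maximal (· ∈ A) x)
    (hrest : ScottClosed (lowerClosure ({z | Maximal (· ∈ A) z} \ {x}) : Set α)) :
    A = Set.Iic x := by
  have hcover : A ⊆ Set.Iic x ∪ lowerClosure ({z | Maximal (· ∈ A) z} \ {x}) := by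
    intro y hy
    obtain ⟨z, hyz, hz⟩ := hA.exists_le_maximal hα hy
    by_cases hzx : z = x
    · exact Or.inl (hyz.trans_eq hzx)
    · exact Or.inr ⟨z, ⟨hz, hzx⟩, hyz⟩
  refine ((hI.2 _ _ (scottClosed_Iic x) hrest hcover).resolve_right fun h => ?_).antisymm
    (hA.1.Iic_subset hx.prop)
  obtain ⟨z, ⟨hz, hzx⟩, hxz⟩ := h hx.prop
  exact hzx (hx.eq_of_ge hz.prop hxz)

namespace JS

/-- The point `(m, k)` of Johnstone's dcpo at finite height `k` in column `m`. -/
def fin (m k : ℕ) : JS := (m, (k : ℕ∞))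

/-- The point `(m, ∞)` of Johnstone's dcpo, the supremum of column `m`. -/
def top (m : ℕ) : JS := (m, ⊤)

@[elab_as_elim]
theorem finTopCases {motive : JS → Prop} (fin : ∀ m k, motive (fin m k))
    (top : ∀ m, motive (top m)) (x : JS) : motive x := by
  obtain ⟨m, n⟩ := x
  induction n using ENat.recTopCoe with
  | top => exact top m
  | coe k => exact fin m k

theorem top_injective : Function.Injective top := fun _ _ h => congrArg Prod.fst h

theorem fin_ne_top (m k m' : ℕ) : fin m k ≠ top m' :=
  fun h => ENat.natCast_ne_top k (congrArg Prod.snd h)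

theorem fin_le_fin {m k m' k' : ℕ} : fin m k ≤ fin m' k' ↔ m = m' ∧ k ≤ k' := by
  change (m = m' ∧ (k : ℕ∞) ≤ k') ∨ ((k' : ℕ∞) = ⊤ ∧ (k : ℕ∞) ≠ ⊤ ∧ (k : ℕ∞) ≤ m') ↔ _
  simp

theorem fin_le_top {m k m' : ℕ} : fin m k ≤ top m' ↔ m = m' ∨ k ≤ m' := by
  change (m = m' ∧ (k : ℕ∞) ≤ ⊤) ∨ ((⊤ : ℕ∞) = ⊤ ∧ (k : ℕ∞) ≠ ⊤ ∧ (k : ℕ∞) ≤ m') ↔ _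
  simp

theorem isMax_top (m : ℕ) : IsMax (top m) := by
  rintro x (⟨hfst, -⟩ | ⟨-, hne, -⟩)
  · exact Or.inl ⟨hfst.symm, le_top⟩
  · exact absurd rfl hne

theorem not_isTop (x : JS) : ¬ IsTop x := fun hx =>
  zero_ne_one (top_injective (((isMax_top 0).eq_of_le (hx _)).trans
    ((isMax_top 1).eq_of_le (hx _)).symm))

theorem isLUB_range_fin (m : ℕ) : IsLUB (Set.range (fin m)) (top m) := by
  refine ⟨Set.forall_mem_range.2 fun k => fin_le_top.2 (Or.inl rfl), fun b hb => ?_⟩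
  have hb' (k : ℕ) : fin m k ≤ b := hb (Set.mem_range_self k)
  cases b using finTopCases with
  | fin m' k' => exact absurd (fin_le_fin.1 (hb' (k' + 1))).2 (by lia)
  | top m' =>
    obtain rfl | h := fin_le_top.1 (hb' (m' + 1))
    · exact le_rfl
    · lia

theorem directedOn_range_fin (m : ℕ) : DirectedOn (· ≤ ·) (Set.range (fin m)) :=
  (Monotone.directed_le fun _ _ h => fin_le_fin.2 ⟨rfl, h⟩).directedOn_range

theorem exists_subset_range_fin {d : Set JS} (hne : d.Nonempty) (hd : DirectedOn (· ≤ ·) d)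
    (htop : ∀ m, top m ∉ d) : ∃ m, d ⊆ Set.range (fin m) := by
  have hfin {x : JS} (hx : x ∈ d) : ∃ m k, x = fin m k := by
    cases x using finTopCases with
    | fin m k => exact ⟨m, k, rfl⟩
    | top m => exact absurd hx (htop m)
  obtain ⟨x, hx⟩ := hne
  obtain ⟨m, k, rfl⟩ := hfin hx
  refine ⟨m, fun y hy => ?_⟩
  obtain ⟨z, hz, hxz, hyz⟩ := hd _ hx y hy
  obtain ⟨m', k', rfl⟩ := hfin hy
  obtain ⟨m'', k'', rfl⟩ := hfin hz
  exact ⟨k', by rw [(fin_le_fin.1 hxz).1, (fin_le_fin.1 hyz).1]⟩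

theorem range_fin_subset_lowerClosure {d : Set JS} {m : ℕ} (hne : d.Nonempty)
    (hdm : d ⊆ Set.range (fin m)) (hmax : ∀ x, ¬ Maximal (· ∈ d) x) :
    Set.range (fin m) ⊆ lowerClosure d := by
  refine Set.range_subset_iff.2 fun n => ?_
  induction n with
  | zero =>
    obtain ⟨x, hx⟩ := hne
    obtain ⟨k, rfl⟩ := hdm hx
    exact ⟨fin m k, hx, fin_le_fin.2 ⟨rfl, k.zero_le⟩⟩
  | succ n ih =>
    obtain ⟨x, hx, hnx⟩ := ih
    obtain ⟨y, hxy, hy⟩ := (not_maximal_iff_exists_gt hx).1 (hmax x)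
    obtain ⟨k, rfl⟩ := hdm hy
    have hnk : n ≠ k := fun h => (hnx.trans_lt hxy).ne (congrArg (fin m) h)
    have hnk' : n ≤ k := (fin_le_fin.1 (hnx.trans hxy.le)).2
    exact ⟨fin m k, hy, fin_le_fin.2 ⟨rfl, hnk'.lt_of_ne hnk⟩⟩

theorem exists_isGreatest_or_isLUB_top {d : Set JS} (hne : d.Nonempty)
    (hd : DirectedOn (· ≤ ·) d) :
    (∃ x, IsGreatest d x) ∨ ∃ m, IsLUB d (top m) ∧ Set.range (fin m) ⊆ lowerClosure d := by
  by_cases hmax : ∃ x, Maximal (· ∈ d) x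
  · obtain ⟨x, hx⟩ := hmax
    exact Or.inl ⟨x, hx.prop, fun y hy => hd.is_top_of_is_max hx.prop
      (fun z hz hxz => hx.le_of_ge hz hxz) y hy⟩
  · rw [not_exists] at hmax
    obtain ⟨m, hdm⟩ := exists_subset_range_fin hne hd fun m hm =>
      hmax (top m) ⟨hm, fun _ _ h => isMax_top m h⟩
    have hmd := range_fin_subset_lowerClosure hne hdm hmax
    refine Or.inr ⟨m, ⟨upperBounds_mono_set hdm (isLUB_range_fin m).1, fun b hb => ?_⟩, hmd⟩
    rw [← upperBounds_lowerClosure] at hb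
    exact (isLUB_range_fin m).2 (upperBounds_mono_set hmd hb)

theorem isDcpo : IsDcpo JS := by
  intro d hne hd
  obtain ⟨x, hx⟩ | ⟨m, hm, -⟩ := exists_isGreatest_or_isLUB_top hne hd
  · exact ⟨x, hx.isLUB⟩
  · exact ⟨top m, hm⟩

theorem scottClosed_iff {S : Set JS} :
    ScottClosed S ↔ IsLowerSet S ∧ ∀ m, Set.range (fin m) ⊆ S → top m ∈ S := by
  refine ⟨fun hS => ⟨hS.1, fun m hm => hS.2 _ hm (Set.range_nonempty _)
    (directedOn_range_fin m) _ (isLUB_range_fin m)⟩, fun ⟨hlow, hcol⟩ => ⟨hlow, ?_⟩⟩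
  intro d hdS hne hd a ha
  obtain ⟨x, hx⟩ | ⟨m, hm, hmd⟩ := exists_isGreatest_or_isLUB_top hne hd
  · exact ha.unique hx.isLUB ▸ hdS hx.1
  · exact ha.unique hm ▸ hcol m (hmd.trans (lowerClosure_min hdS hlow))

theorem eq_univ_of_frequently_top_mem {S : Set JS} (hS : ScottClosed S)
    (h : ∃ᶠ m in Filter.atTop, top m ∈ S) : S = Set.univ := by
  have hfin (m k : ℕ) : fin m k ∈ S := by
    obtain ⟨j, hkj, hj⟩ := Filter.frequently_atTop.1 h k
    exact hS.1 (fin_le_top.2 (Or.inr hkj)) hj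
  refine Set.eq_univ_of_forall fun x => ?_
  cases x using finTopCases with
  | fin m k => exact hfin m k
  | top m => exact (scottClosed_iff.1 hS).2 m (Set.range_subset_iff.2 (hfin m))

theorem scottIrred_univ : ScottIrred (Set.univ : Set JS) := by
  refine ⟨⟨top 0, Set.mem_univ _⟩, fun B C hB hC hBC => ?_⟩
  have htops : ∃ᶠ m in Filter.atTop, top m ∈ B ∨ top m ∈ C :=
    Filter.Frequently.of_forall fun m => hBC (Set.mem_univ (top m))
  exact (Filter.frequently_or_distrib.1 htops).imp
    (fun h => (eq_univ_of_frequently_top_mem hB h).ge)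
    (fun h => (eq_univ_of_frequently_top_mem hC h).ge)

theorem scottClosed_lowerClosure_of_maximal {A M : Set JS} (hA : ScottClosed A)
    (hA' : A ≠ Set.univ) (hM : ∀ z ∈ M, Maximal (· ∈ A) z) :
    ScottClosed (lowerClosure M : Set JS) := by
  refine scottClosed_iff.2 ⟨(lowerClosure M).lower, fun j hj => ?_⟩
  have hjA : top j ∈ A := (scottClosed_iff.1 hA).2 j
    (hj.trans (lowerClosure_min (fun z hz => (hM z hz).prop) hA.1))
  obtain ⟨N, hN⟩ := Filter.eventually_atTop.1
    (Filter.not_frequently.1 (mt (eq_univ_of_frequently_top_mem hA) hA'))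
  obtain ⟨z, hzM, hz⟩ := hj (Set.mem_range_self N)
  cases z using finTopCases with
  | fin m k =>
    obtain rfl := (fin_le_fin.1 hz).1
    exact absurd ((hM _ hzM).eq_of_le hjA (fin_le_top.2 (Or.inl rfl))) (fin_ne_top _ _ _)
  | top m =>
    obtain rfl | hNm := fin_le_top.1 hz
    · exact subset_lowerClosure hzM
    · exact absurd (hM _ hzM).prop (hN m hNm)

theorem eq_univ_or_eq_Iic {A : Set JS} (hA : ScottClosed A) (hI : ScottIrred A) :
    A = Set.univ ∨ ∃ x, A = Set.Iic x := by
  refine or_iff_not_imp_left.2 fun hA' => ?_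
  obtain ⟨y, hy⟩ := hI.1
  obtain ⟨x, -, hx⟩ := hA.exists_le_maximal isDcpo hy
  exact ⟨x, hI.eq_Iic_of_maximal isDcpo hA hx
    (scottClosed_lowerClosure_of_maximal hA hA' fun z hz => hz.1)⟩

end JS

/-- the closed irreducible subsets of Johnstone's dcpo 𝕊 are exactly 𝕊
itself and the principal downsets ↓x; 𝕊 has no largest element, so its Scott topology is
not sober. -/
theorem johnstone_irreducibles :
    (∀ A : Set JS, (ScottClosed A ∧ ScottIrred A) ↔
      (A = Set.univ ∨ ∃ x : JS, A = {y : JS | y ≤ x})) ∧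
    (¬ ∃ x : JS, ∀ y : JS, y ≤ x) ∧
    ¬ (∀ A : Set JS, ScottClosed A → ScottIrred A → ∃ x : JS, A = {y : JS | y ≤ x}) := by
  refine ⟨fun A => ⟨fun ⟨hA, hI⟩ => JS.eq_univ_or_eq_Iic hA hI, ?_⟩,
    fun ⟨x, hx⟩ => JS.not_isTop x hx, fun sober => ?_⟩
  · rintro (rfl | ⟨x, rfl⟩)
    · exact ⟨scottClosed_univ, JS.scottIrred_univ⟩
    · exact ⟨scottClosed_Iic x, scottIrred_Iic x⟩
  · obtain ⟨x, hx⟩ := sober Set.univ scottClosed_univ JS.scottIrred_univ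
    exact JS.not_isTop x fun y => hx.le (Set.mem_univ y)

end HoZhao
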